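/- Let S > 0, 0 < δ₁ < S, δ₂ > 0, r > 0. Let χ : [0,S] × ∂Ω → [0,∞) be continuous with χ(t,x) = δ₂ for all (t,x) ∈ [δ₁,S] × ∂Ω, and let q : (0,S) × Ω → ℝ be continuous and bounded. Let F₁ : [0,S] × cl(Ω) × ℝ → ℝ be continuous, twice continuously differentiable in the last variable, with F₁(t,x,0) = 0, ∂²_uF₁(t,x,u) ≤ 0 for u ≥ 0, ∂²_uF₁(t,x,u) ≥ 0 for u ≤ 0, and ∂_uF₁(t,x,0) ≤ q(t,x) on (0,S) × Ω. Suppose that for each λ ∈ [−r,r] there are functions v_λ, v⁽¹⁾_λ, v⁽²⁾_λ : [0,S] × cl(Ω) → ℝ such that, setting V_λ(t,x) := ∂_uF₁(t,x,v_λ(t,x)): v_λ is a classical solution of ∂_t v − Δv + F₁(t,x,v) = 0 in (0,S) × Ω with lateral boundary values λχ and zero initial values, v_0 ≡ 0; v⁽¹⁾_λ is a classical solution of ∂_t u − Δu + V_λ u = 0 with lateral boundary values χ and zero initial values; v⁽²⁾_λ is a classical solution of ∂_t u − Δu + V_λ u = −∂²_uF₁(t,x,v_λ(t,x)) (v⁽¹⁾_λ(t,x))²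 with zero lateral boundary values and zero initial values; and for each (t,x), λ ↦ v_λ(t,x) is continuous on [−r,r] and differentiable on (−r,r) with derivative v⁽¹⁾_λ(t,x), and λ ↦ v⁽¹⁾_λ(t,x) is differentiable on (−r,r) with derivative v⁽²⁾_λ(t,x). Let w be a classical solution of ∂_t w − Δw + q w = 0 in (0,S) × Ω with lateral boundary values χ and zero initial values and set a₁ := inf { w(t,x) : (t,x) ∈ [δ₁,S] × cl(Ω) }. Finally, let F₂ : [0,S] × cl(Ω) × ℝ → ℝ be continuous and continuously differentiable in the last variable with F₂(t,x,0) = 0, and assume that ∂_uF₁(t,x,v_λ(t,x)) = ∂_uF₂(t,x,v_λ(t,x)) for all λ ∈ [−r,r] and all (t,x) ∈ (δ₁,S) × Ω. Then F₁(t,x,s) = F₂(t,x,s) for all (t,x) ∈ (δ₁,S) × Ω and all s ∈ [−a₁ r, a₁ r]. -/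

import Mathlib

open Set

namespace Paper

noncomputable section

/-- Time derivative `∂ₜu`. -/
def timeDeriv {n : ℕ} (u : ℝ → (Fin n → ℝ) → ℝ) (t : ℝ) (x : Fin n → ℝ) : ℝ :=
  deriv (fun s => u s x) t

/-- Spatial partial derivative `∂ᵢu`. -/
def spatialDeriv {n : ℕ} (u : ℝ → (Fin n → ℝ) → ℝ) (i : Fin n) (t : ℝ) (x : Fin n → ℝ) : ℝ :=
  deriv (fun s => u t (Function.update x i s)) (x i)

/-- Second spatial partial derivative `∂ᵢ∂ⱼu`. -/
def spatialDeriv2 {n : ℕ} (u : ℝ → (Fin n → ℝ) → ℝ) (i j : Fin n) (t : ℝ)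
    (x : Fin n → ℝ) : ℝ :=
  spatialDeriv (spatialDeriv u j) i t x

/-- Laplacian in the space variables. -/
def laplacian {n : ℕ} (u : ℝ → (Fin n → ℝ) → ℝ) (t : ℝ) (x : Fin n → ℝ) : ℝ :=
  ∑ i, spatialDeriv2 u i i t x

/-- Parabolic regularity: `u` is continuous on `[0,S] × cl Ω`, and `∂ₜu` together with all
spatial partial derivatives of `u` up to order 2 exist and are continuous on `(0,S) × Ω`. -/
structure ParabolicRegular {n : ℕ} (Ω : Set (Fin n → ℝ)) (S : ℝ)
    (u : ℝ → (Fin n → ℝ) → ℝ) : Prop where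
  cont : ContinuousOn (fun p : ℝ × (Fin n → ℝ) => u p.1 p.2) (Icc 0 S ×ˢ closure Ω)
  diff_t : ∀ t ∈ Ioo 0 S, ∀ x ∈ Ω, DifferentiableAt ℝ (fun s => u s x) t
  diff_x : ∀ t ∈ Ioo 0 S, ∀ x ∈ Ω, ∀ i,
    DifferentiableAt ℝ (fun s => u t (Function.update x i s)) (x i)
  diff_xx : ∀ t ∈ Ioo 0 S, ∀ x ∈ Ω, ∀ i j,
    DifferentiableAt ℝ (fun s => spatialDeriv u j t (Function.update x i s)) (x i)
  cont_t : ContinuousOn (fun p : ℝ × (Fin n → ℝ) => timeDeriv u p.1 p.2) (Ioo 0 S ×ˢ Ω)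
  cont_x : ∀ i, ContinuousOn (fun p : ℝ × (Fin n → ℝ) => spatialDeriv u i p.1 p.2)
    (Ioo 0 S ×ˢ Ω)
  cont_xx : ∀ i j, ContinuousOn (fun p : ℝ × (Fin n → ℝ) => spatialDeriv2 u i j p.1 p.2)
    (Ioo 0 S ×ˢ Ω)

/-- Classical solution of `∂ₜu − Δu + c u = f` in `(0,S) × Ω` with lateral boundary values `g`
and zero initial values. -/
structure IsClassicalSolution {n : ℕ} (Ω : Set (Fin n → ℝ)) (S : ℝ)
    (c f g u : ℝ → (Fin n → ℝ) → ℝ) extends ParabolicRegular Ω S u : Prop where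
  eqn : ∀ t ∈ Ioo 0 S, ∀ x ∈ Ω, timeDeriv u t x - laplacian u t x + c t x * u t x = f t x
  lateral : ∀ t ∈ Icc 0 S, ∀ x ∈ frontier Ω, u t x = g t x
  initial : ∀ x ∈ closure Ω, u 0 x = 0

/-- `∂_u F` for a semilinear term `F(t,x,u)`. -/
def uDeriv {n : ℕ} (F : ℝ → (Fin n → ℝ) → ℝ → ℝ) (t : ℝ) (x : Fin n → ℝ) (u : ℝ) : ℝ :=
  deriv (F t x) u

/-- `∂_u² F`. -/
def uDeriv2 {n : ℕ} (F : ℝ → (Fin n → ℝ) → ℝ → ℝ) : ℝ → (Fin n → ℝ) → ℝ → ℝ :=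
  uDeriv (uDeriv F)

/-- `∂_u³ F`. -/
def uDeriv3 {n : ℕ} (F : ℝ → (Fin n → ℝ) → ℝ → ℝ) : ℝ → (Fin n → ℝ) → ℝ → ℝ :=
  uDeriv (uDeriv2 F)

/-- `∂_u⁴ F`. -/
def uDeriv4 {n : ℕ} (F : ℝ → (Fin n → ℝ) → ℝ → ℝ) : ℝ → (Fin n → ℝ) → ℝ → ℝ :=
  uDeriv (uDeriv3 F)

/-- `∂ₜF` for `F` depending on `(t,x,u)`. -/
def FtDeriv {n : ℕ} (F : ℝ → (Fin n → ℝ) → ℝ → ℝ) (t : ℝ) (x : Fin n → ℝ) (u : ℝ) : ℝ :=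
  deriv (fun s => F s x u) t

/-- `∂_{xᵢ}F` for `F` depending on `(t,x,u)`. -/
def FxDeriv {n : ℕ} (F : ℝ → (Fin n → ℝ) → ℝ → ℝ) (i : Fin n) (t : ℝ) (x : Fin n → ℝ)
    (u : ℝ) : ℝ :=
  deriv (fun s => F t (Function.update x i s) u) (x i)

/-- `F` is continuous on `[0,S] × cl Ω × ℝ` and continuously differentiable in the last
variable. -/
def C1InU {n : ℕ} (Ω : Set (Fin n → ℝ)) (S : ℝ) (F : ℝ → (Fin n → ℝ) → ℝ → ℝ) : Prop :=
  ContinuousOn (fun p : ℝ × (Fin n → ℝ) × ℝ => F p.1 p.2.1 p.2.2)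
    (Icc 0 S ×ˢ closure Ω ×ˢ (univ : Set ℝ)) ∧
  (∀ t ∈ Icc 0 S, ∀ x ∈ closure Ω, ∀ u : ℝ, DifferentiableAt ℝ (F t x) u) ∧
  ContinuousOn (fun p : ℝ × (Fin n → ℝ) × ℝ => uDeriv F p.1 p.2.1 p.2.2)
    (Icc 0 S ×ˢ closure Ω ×ˢ (univ : Set ℝ))

/-- `F` is continuous and twice continuously differentiable in the last variable. -/
def C2InU {n : ℕ} (Ω : Set (Fin n → ℝ)) (S : ℝ) (F : ℝ → (Fin n → ℝ) → ℝ → ℝ) : Prop :=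
  C1InU Ω S F ∧
  (∀ t ∈ Icc 0 S, ∀ x ∈ closure Ω, ∀ u : ℝ, DifferentiableAt ℝ (uDeriv F t x) u) ∧
  ContinuousOn (fun p : ℝ × (Fin n → ℝ) × ℝ => uDeriv2 F p.1 p.2.1 p.2.2)
    (Icc 0 S ×ˢ closure Ω ×ˢ (univ : Set ℝ))

/-- `‖f‖_{W^{1,∞}} ≤ B` on `[0,S] × cl Ω`, stated componentwise: `f`, `∂ₜf` and all `∂ᵢf`
are bounded by `B` in absolute value. -/
def W1infLE {n : ℕ} (Ω : Set (Fin n → ℝ)) (S : ℝ) (f : ℝ → (Fin n → ℝ) → ℝ) (B : ℝ) : Prop :=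
  ∀ t ∈ Icc 0 S, ∀ x ∈ closure Ω,
    |f t x| ≤ B ∧ |timeDeriv f t x| ≤ B ∧ ∀ i, |spatialDeriv f i t x| ≤ B

/-- `f` has bounded continuous first-order derivatives on `[0,S] × cl Ω`. -/
def C1Bounded {n : ℕ} (Ω : Set (Fin n → ℝ)) (S : ℝ) (f : ℝ → (Fin n → ℝ) → ℝ) : Prop :=
  (∀ t ∈ Icc 0 S, ∀ x ∈ closure Ω, DifferentiableAt ℝ (fun s => f s x) t ∧
    ∀ i, DifferentiableAt ℝ (fun s => f t (Function.update x i s)) (x i)) ∧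
  ContinuousOn (fun p : ℝ × (Fin n → ℝ) => f p.1 p.2) (Icc 0 S ×ˢ closure Ω) ∧
  ContinuousOn (fun p : ℝ × (Fin n → ℝ) => timeDeriv f p.1 p.2) (Icc 0 S ×ˢ closure Ω) ∧
  (∀ i, ContinuousOn (fun p : ℝ × (Fin n → ℝ) => spatialDeriv f i p.1 p.2)
    (Icc 0 S ×ˢ closure Ω)) ∧
  ∃ B, W1infLE Ω S f B

/-- Componentwise bound `‖f‖_* ≤ ε` for the parabolic Schauder norm of
`C([0,S];C^{2+α}(cl Ω)) ∩ C^{1+α/2}([0,S];C(cl Ω))`: sup bounds on `f`, `∂ₜf`, spatial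
derivatives up to order 2, the `α`-Hölder (in `x`) seminorms of the second spatial derivatives,
and the `α/2`-Hölder (in `t`) seminorm of `∂ₜf`. -/
def SchauderLE {n : ℕ} (α : ℝ) (Ω : Set (Fin n → ℝ)) (S : ℝ) (f : ℝ → (Fin n → ℝ) → ℝ)
    (ε : ℝ) : Prop :=
  (∀ t ∈ Icc 0 S, ∀ x ∈ closure Ω,
    |f t x| ≤ ε ∧ |timeDeriv f t x| ≤ ε ∧ (∀ i, |spatialDeriv f i t x| ≤ ε) ∧
    ∀ i j, |spatialDeriv2 f i j t x| ≤ ε) ∧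
  (∀ t ∈ Icc 0 S, ∀ x ∈ closure Ω, ∀ x' ∈ closure Ω, ∀ i j,
    |spatialDeriv2 f i j t x - spatialDeriv2 f i j t x'| ≤ ε * dist x x' ^ α) ∧
  (∀ x ∈ closure Ω, ∀ t ∈ Icc 0 S, ∀ t' ∈ Icc 0 S,
    |timeDeriv f t x - timeDeriv f t' x| ≤ ε * |t - t'| ^ (α / 2))

/-- `G`, `∂ₜG` and the `∂_{xᵢ}G` exist and are continuous on `[0,S] × cl Ω × ℝ`. -/
def C1InTX {n : ℕ} (Ω : Set (Fin n → ℝ)) (S : ℝ) (G : ℝ → (Fin n → ℝ) → ℝ → ℝ) : Prop :=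
  (∀ t ∈ Icc 0 S, ∀ x ∈ closure Ω, ∀ u : ℝ,
    DifferentiableAt ℝ (fun s => G s x u) t ∧
    ∀ i, DifferentiableAt ℝ (fun s => G t (Function.update x i s) u) (x i)) ∧
  ContinuousOn (fun p : ℝ × (Fin n → ℝ) × ℝ => G p.1 p.2.1 p.2.2)
    (Icc 0 S ×ˢ closure Ω ×ˢ (univ : Set ℝ)) ∧
  ContinuousOn (fun p : ℝ × (Fin n → ℝ) × ℝ => FtDeriv G p.1 p.2.1 p.2.2)
    (Icc 0 S ×ˢ closure Ω ×ˢ (univ : Set ℝ)) ∧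
  ∀ i, ContinuousOn (fun p : ℝ × (Fin n → ℝ) × ℝ => FxDeriv G i p.1 p.2.1 p.2.2)
    (Icc 0 S ×ˢ closure Ω ×ˢ (univ : Set ℝ))

/-- `G`, `∂ₜG` and the `∂_{xᵢ}G` are bounded by `κ(|u|)` on `[0,S] × cl Ω`, for every `u`. -/
def BoundedByKappa {n : ℕ} (Ω : Set (Fin n → ℝ)) (S : ℝ) (G : ℝ → (Fin n → ℝ) → ℝ → ℝ)
    (κ : ℝ → ℝ) : Prop :=
  ∀ u : ℝ, ∀ t ∈ Icc 0 S, ∀ x ∈ closure Ω,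
    |G t x u| ≤ κ |u| ∧ |FtDeriv G t x u| ≤ κ |u| ∧ ∀ i, |FxDeriv G i t x u| ≤ κ |u|

/-- The family of solutions of the semilinear problem with boundary data `λχ`, together with
its first and second linearizations in the boundary parameter `λ`. -/
structure SemilinearFamily {n : ℕ} (Ω : Set (Fin n → ℝ)) (S r : ℝ)
    (χ : ℝ → (Fin n → ℝ) → ℝ) (F : ℝ → (Fin n → ℝ) → ℝ → ℝ)
    (v v1 v2 : ℝ → ℝ → (Fin n → ℝ) → ℝ) : Prop where
  sol : ∀ lam ∈ Icc (-r) r, IsClassicalSolution Ω S (fun _ _ => (0 : ℝ))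
      (fun t x => -F t x (v lam t x)) (fun t x => lam * χ t x) (v lam)
  zero : ∀ t ∈ Icc 0 S, ∀ x ∈ closure Ω, v 0 t x = 0
  lin1 : ∀ lam ∈ Icc (-r) r, IsClassicalSolution Ω S
      (fun t x => uDeriv F t x (v lam t x)) (fun _ _ => (0 : ℝ)) χ (v1 lam)
  lin2 : ∀ lam ∈ Icc (-r) r, IsClassicalSolution Ω S
      (fun t x => uDeriv F t x (v lam t x))
      (fun t x => -uDeriv2 F t x (v lam t x) * (v1 lam t x) ^ 2) (fun _ _ => (0 : ℝ)) (v2 lam)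
  cont_lam : ∀ t ∈ Icc 0 S, ∀ x ∈ closure Ω, ContinuousOn (fun lam => v lam t x) (Icc (-r) r)
  deriv1 : ∀ t ∈ Icc 0 S, ∀ x ∈ closure Ω, ∀ lam ∈ Ioo (-r) r,
      HasDerivAt (fun μ => v μ t x) (v1 lam t x) lam
  deriv2 : ∀ t ∈ Icc 0 S, ∀ x ∈ closure Ω, ∀ lam ∈ Ioo (-r) r,
      HasDerivAt (fun μ => v1 μ t x) (v2 lam t x) lam

end

end Paper

open Paper Set

/-!
The first linearization `v1 lam` and `w` have the same boundary and initial values, and their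
potentials satisfy `uDeriv F₁ t x (v lam t x) ≤ uDeriv F₁ t x 0 ≤ q t x`, so the parabolic maximum
principle gives `0 ≤ w ≤ v1 lam`. For fixed `(t, x)`, the function `lam ↦ v lam t x` therefore
vanishes at `0` and has slope at least `w t x`; it takes every value in `[-w t x * r, w t x * r]`.
On that interval `∂_u F₁ = ∂_u F₂`, and `F₁` and `F₂` agree at `u = 0`.
-/

namespace Paper

section OneVariable

theorem deriv_deriv_nonneg_of_isLocalMin {g : ℝ → ℝ} {a : ℝ} (hmin : IsLocalMin g a)
    (hg : ContinuousAt g a) : 0 ≤ deriv (deriv g) a := by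
  by_contra! hneg
  have hmax : IsLocalMax g a := isLocalMax_of_deriv_deriv_neg hneg hmin.deriv_eq_zero hg
  have hconst : g =ᶠ[nhds a] fun _ => g a := by
    filter_upwards [hmin, hmax] with y hle hge using le_antisymm hge hle
  have hzero : deriv (deriv g) a = 0 := by
    rw [hconst.deriv.deriv_eq]
    simp only [deriv_const', deriv_const]
  exact hneg.ne hzero

theorem deriv_le_mul_of_isMinOn_exp_mul {f : ℝ → ℝ} {K a t : ℝ} (hat : a < t)
    (hf : DifferentiableAt ℝ f t)
    (hmin : IsMinOn (fun s => Real.exp (-K * s) * f s) (Icc a t) t) :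
    deriv f t ≤ K * f t := by
  have hexp : HasDerivAt (fun s => Real.exp (-K * s)) (Real.exp (-K * t) * -K) t := by
    simpa using ((hasDerivAt_id t).const_mul (-K)).exp
  have hprod := (hexp.mul hf.hasDerivAt).hasDerivWithinAt (s := Icc a t)
  have hdir : a - t ∈ posTangentConeAt (Icc a t) t :=
    sub_mem_posTangentConeAt_of_segment_subset
      (by rw [segment_symm, segment_eq_Icc hat.le])
  have hnonneg : 0 ≤ (a - t) *
      (Real.exp (-K * t) * -K * f t + Real.exp (-K * t) * deriv f t) := by
    simpa using hmin.localize.hasFDerivWithinAt_nonneg hprod.hasFDerivWithinAt hdir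
  have hfactor : 0 ≤ ((t - a) * Real.exp (-K * t)) * (K * f t - deriv f t) := by
    linear_combination hnonneg
  exact sub_nonneg.1
    (nonneg_of_mul_nonneg_right hfactor (mul_pos (sub_pos.2 hat) (Real.exp_pos _)))

theorem eqOn_of_deriv_eq_of_convex {E : Type*} [NormedAddCommGroup E] [NormedSpace ℝ E]
    {f g : ℝ → E} {s : Set ℝ} {a : ℝ} (hs : Convex ℝ s)
    (hf : ∀ u ∈ s, DifferentiableAt ℝ f u) (hg : ∀ u ∈ s, DifferentiableAt ℝ g u)
    (hderiv : EqOn (deriv f) (deriv g) s) (ha : a ∈ s) (hfg : f a = g a) : EqOn f g s := by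
  intro u hu
  have hconst := hs.norm_image_sub_le_of_norm_hasDerivWithin_le (f := f - g)
    (f' := deriv f - deriv g) (C := 0)
    (fun y hy => ((hf y hy).hasDerivAt.sub (hg y hy).hasDerivAt).hasDerivWithinAt)
    (fun y hy => by simp [hderiv hy]) ha hu
  simpa [hfg, sub_eq_zero] using hconst

theorem Icc_subset_image_of_le_deriv {f f' : ℝ → ℝ} {a r : ℝ} (hr : 0 ≤ r)
    (hf : ContinuousOn f (Icc (-r) r)) (hf' : ∀ l ∈ Ioo (-r) r, HasDerivAt f (f' l) l)
    (hle : ∀ l ∈ Ioo (-r) r, a ≤ f' l) (hf0 : f 0 = 0) :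
    Icc (-(a * r)) (a * r) ⊆ f '' Icc (-r) r := by
  have hgrowth : ∀ᵉ (l ∈ Icc (-r) r) (m ∈ Icc (-r) r), l ≤ m → a * (m - l) ≤ f m - f l := by
    apply (convex_Icc (-r) r).mul_sub_le_image_sub_of_le_deriv hf
    · rw [interior_Icc]
      exact fun l hl => (hf' l hl).differentiableAt.differentiableWithinAt
    · rw [interior_Icc]
      exact fun l hl => (hle l hl).trans_eq (hf' l hl).deriv.symm
  have hneg : -r ≤ 0 := neg_nonpos.2 hr
  have hlow := hgrowth (-r) ⟨le_rfl, hneg.trans hr⟩ 0 ⟨hneg, hr⟩ hneg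
  have hhigh := hgrowth 0 ⟨hneg, hr⟩ r ⟨hneg.trans hr, le_rfl⟩ hr
  rw [hf0] at hlow hhigh
  exact (Icc_subset_Icc (by linarith) (by linarith)).trans
    (intermediate_value_Icc (hneg.trans hr) hf)

end OneVariable

section ParabolicRegularity

variable {n : ℕ} {Ω : Set (Fin n → ℝ)} {S t : ℝ} {u u₁ u₂ : ℝ → (Fin n → ℝ) → ℝ}
  {x : Fin n → ℝ}

theorem spatialDeriv_update (u : ℝ → (Fin n → ℝ) → ℝ) (i : Fin n) (t : ℝ) (x : Fin n → ℝ)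
    (s : ℝ) :
    spatialDeriv u i t (Function.update x i s) =
      deriv (fun s => u t (Function.update x i s)) s := by
  simp [spatialDeriv]

theorem spatialDeriv2_self (u : ℝ → (Fin n → ℝ) → ℝ) (i : Fin n) (t : ℝ) (x : Fin n → ℝ) :
    spatialDeriv2 u i i t x = deriv (deriv fun s => u t (Function.update x i s)) (x i) :=
  congrArg (deriv · (x i)) (funext (spatialDeriv_update u i t x))

theorem eventually_update_mem (hΩ : IsOpen Ω) (hx : x ∈ Ω) (i : Fin n) :
    ∀ᶠ s in nhds (x i), Function.update x i s ∈ Ω :=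
  (continuous_const.update i continuous_id).continuousAt.eventually
    (hΩ.mem_nhds (by simpa using hx))

theorem laplacian_nonneg_of_isLocalMin (hmin : IsLocalMin (u t) x)
    (hu : ∀ i, ContinuousAt (fun s => u t (Function.update x i s)) (x i)) :
    0 ≤ laplacian u t x := by
  refine Finset.sum_nonneg fun i _ => ?_
  rw [spatialDeriv2_self]
  refine deriv_deriv_nonneg_of_isLocalMin ?_ (hu i)
  refine IsLocalMin.comp_continuous (f := u t) ?_
    (continuous_const.update i continuous_id).continuousAt
  simpa using hmin

namespace ParabolicRegular

theorem timeDeriv_sub (h₁ : ParabolicRegular Ω S u₁) (h₂ : ParabolicRegular Ω S u₂)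
    (ht : t ∈ Ioo 0 S) (hx : x ∈ Ω) :
    timeDeriv (u₁ - u₂) t x = timeDeriv u₁ t x - timeDeriv u₂ t x :=
  deriv_fun_sub (h₁.diff_t t ht x hx) (h₂.diff_t t ht x hx)

theorem spatialDeriv_sub (h₁ : ParabolicRegular Ω S u₁) (h₂ : ParabolicRegular Ω S u₂)
    (ht : t ∈ Ioo 0 S) (hx : x ∈ Ω) (i : Fin n) :
    spatialDeriv (u₁ - u₂) i t x = spatialDeriv u₁ i t x - spatialDeriv u₂ i t x :=
  deriv_fun_sub (h₁.diff_x t ht x hx i) (h₂.diff_x t ht x hx i)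

theorem spatialDeriv_sub_eventuallyEq (hΩ : IsOpen Ω) (h₁ : ParabolicRegular Ω S u₁)
    (h₂ : ParabolicRegular Ω S u₂) (ht : t ∈ Ioo 0 S) (hx : x ∈ Ω) (i j : Fin n) :
    (fun s => spatialDeriv (u₁ - u₂) j t (Function.update x i s)) =ᶠ[nhds (x i)] fun s =>
      spatialDeriv u₁ j t (Function.update x i s) -
        spatialDeriv u₂ j t (Function.update x i s) := by
  filter_upwards [eventually_update_mem hΩ hx i] with s hs
    using h₁.spatialDeriv_sub h₂ ht hs j

theorem spatialDeriv2_sub (hΩ : IsOpen Ω) (h₁ : ParabolicRegular Ω S u₁)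
    (h₂ : ParabolicRegular Ω S u₂) (ht : t ∈ Ioo 0 S) (hx : x ∈ Ω) (i j : Fin n) :
    spatialDeriv2 (u₁ - u₂) i j t x = spatialDeriv2 u₁ i j t x - spatialDeriv2 u₂ i j t x :=
  (h₁.spatialDeriv_sub_eventuallyEq hΩ h₂ ht hx i j).deriv_eq.trans
    (deriv_fun_sub (h₁.diff_xx t ht x hx i j) (h₂.diff_xx t ht x hx i j))

theorem laplacian_sub (hΩ : IsOpen Ω) (h₁ : ParabolicRegular Ω S u₁)
    (h₂ : ParabolicRegular Ω S u₂) (ht : t ∈ Ioo 0 S) (hx : x ∈ Ω) :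
    laplacian (u₁ - u₂) t x = laplacian u₁ t x - laplacian u₂ t x := by
  simp only [laplacian, h₁.spatialDeriv2_sub hΩ h₂ ht hx, Finset.sum_sub_distrib]

protected theorem sub (hΩ : IsOpen Ω) (h₁ : ParabolicRegular Ω S u₁)
    (h₂ : ParabolicRegular Ω S u₂) : ParabolicRegular Ω S (u₁ - u₂) where
  cont := h₁.cont.sub h₂.cont
  diff_t t ht x hx := (h₁.diff_t t ht x hx).sub (h₂.diff_t t ht x hx)
  diff_x t ht x hx i := (h₁.diff_x t ht x hx i).sub (h₂.diff_x t ht x hx i)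
  diff_xx t ht x hx i j :=
    ((h₁.diff_xx t ht x hx i j).sub (h₂.diff_xx t ht x hx i j)).congr_of_eventuallyEq
      (h₁.spatialDeriv_sub_eventuallyEq hΩ h₂ ht hx i j)
  cont_t := (h₁.cont_t.sub h₂.cont_t).congr fun _ hp => h₁.timeDeriv_sub h₂ hp.1 hp.2
  cont_x i := ((h₁.cont_x i).sub (h₂.cont_x i)).congr fun _ hp =>
    h₁.spatialDeriv_sub h₂ hp.1 hp.2 i
  cont_xx i j := ((h₁.cont_xx i j).sub (h₂.cont_xx i j)).congr fun _ hp =>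
    h₁.spatialDeriv2_sub hΩ h₂ hp.1 hp.2 i j

theorem sInf_image_le {δ : ℝ} (hΩ : Bornology.IsBounded Ω) (h : ParabolicRegular Ω S u)
    (hδ : 0 ≤ δ) (ht : t ∈ Icc δ S) (hx : x ∈ closure Ω) :
    sInf ((fun p : ℝ × (Fin n → ℝ) => u p.1 p.2) '' (Icc δ S ×ˢ closure Ω)) ≤ u t x :=
  csInf_le ((isCompact_Icc.prod hΩ.isCompact_closure).bddBelow_image
    (h.cont.mono (prod_mono_left (Icc_subset_Icc_left hδ)))) ⟨(t, x), ⟨ht, hx⟩, rfl⟩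

end ParabolicRegular

end ParabolicRegularity

namespace IsClassicalSolution

variable {n : ℕ} {Ω : Set (Fin n → ℝ)} {S : ℝ}
  {c c₁ c₂ f f₁ f₂ g g₁ g₂ u u₁ u₂ : ℝ → (Fin n → ℝ) → ℝ}

protected theorem sub (hΩ : IsOpen Ω) (h₁ : IsClassicalSolution Ω S c₁ f₁ g₁ u₁)
    (h₂ : IsClassicalSolution Ω S c₂ f₂ g₂ u₂) :
    IsClassicalSolution Ω S c₁ (f₁ - f₂ + (c₂ - c₁) * u₂) (g₁ - g₂) (u₁ - u₂) where
  toParabolicRegular := h₁.toParabolicRegular.sub hΩ h₂.toParabolicRegular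
  eqn t ht x hx := by
    rw [h₁.timeDeriv_sub h₂.toParabolicRegular ht hx,
      h₁.laplacian_sub hΩ h₂.toParabolicRegular ht hx]
    simp only [Pi.add_apply, Pi.sub_apply, Pi.mul_apply]
    linear_combination h₁.eqn t ht x hx - h₂.eqn t ht x hx
  lateral t ht x hx := congrArg₂ (· - ·) (h₁.lateral t ht x hx) (h₂.lateral t ht x hx)
  initial x hx := by simp [h₁.initial x hx, h₂.initial x hx]

/- At a minimum of `exp (-K t) u` one has `∂ₜu ≤ K u` and `0 ≤ Δu`, so that
`0 ≤ f = ∂ₜu - Δu + c u ≤ (K + c) u`. -/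
theorem nonneg_of_isMinOn_exp_mul {K T t : ℝ} {x : Fin n → ℝ} (hΩ : IsOpen Ω)
    (hu : IsClassicalSolution Ω S c f g u) (hc : 0 < K + c t x) (hf : 0 ≤ f t x)
    (ht : t ∈ Ioc 0 T) (hTS : T < S) (hx : x ∈ Ω)
    (hmin : IsMinOn (fun p : ℝ × (Fin n → ℝ) => Real.exp (-K * p.1) * u p.1 p.2)
      (Icc 0 T ×ˢ closure Ω) (t, x)) :
    0 ≤ u t x := by
  have htS : t ∈ Ioo 0 S := ⟨ht.1, ht.2.trans_lt hTS⟩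
  have hlap : 0 ≤ laplacian u t x := by
    refine laplacian_nonneg_of_isLocalMin ?_ fun i => (hu.diff_x t htS x hx i).continuousAt
    filter_upwards [hΩ.mem_nhds hx] with y hy
    have hy' : (t, y) ∈ Icc 0 T ×ˢ closure Ω := ⟨Ioc_subset_Icc_self ht, subset_closure hy⟩
    exact le_of_mul_le_mul_left (hmin hy') (Real.exp_pos _)
  have htime : timeDeriv u t x ≤ K * u t x := by
    refine deriv_le_mul_of_isMinOn_exp_mul ht.1 (hu.diff_t t htS x hx) fun s hs => ?_
    have hs' : (s, x) ∈ Icc 0 T ×ˢ closure Ω :=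
      ⟨⟨hs.1, hs.2.trans ht.2⟩, subset_closure hx⟩
    exact hmin hs'
  have hprod : 0 ≤ (K + c t x) * u t x := by linarith [hu.eqn t htS x hx]
  exact nonneg_of_mul_nonneg_right hprod hc

theorem nonneg_of_lt {m t : ℝ} {x : Fin n → ℝ} (hΩo : IsOpen Ω)
    (hΩb : Bornology.IsBounded Ω) (hu : IsClassicalSolution Ω S c f g u)
    (hc : ∀ t ∈ Ioo 0 S, ∀ x ∈ Ω, m ≤ c t x) (hf : ∀ t ∈ Ioo 0 S, ∀ x ∈ Ω, 0 ≤ f t x)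
    (hg : ∀ t ∈ Icc 0 S, ∀ x ∈ frontier Ω, 0 ≤ g t x) (ht : t ∈ Ico 0 S)
    (hx : x ∈ closure Ω) : 0 ≤ u t x := by
  let z : ℝ × (Fin n → ℝ) → ℝ := fun p => Real.exp (-(1 - m) * p.1) * u p.1 p.2
  have hz : ContinuousOn z (Icc 0 t ×ˢ closure Ω) :=
    ContinuousOn.mul (by fun_prop)
      (hu.cont.mono (prod_mono_left (Icc_subset_Icc_right ht.2.le)))
  have htx : (t, x) ∈ Icc 0 t ×ˢ closure Ω := ⟨⟨ht.1, le_rfl⟩, hx⟩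
  obtain ⟨⟨t₀, x₀⟩, ⟨ht₀, hx₀⟩, hmin⟩ :=
    (isCompact_Icc.prod hΩb.isCompact_closure).exists_isMinOn ⟨(t, x), htx⟩ hz
  suffices h : 0 ≤ u t₀ x₀ from
    nonneg_of_mul_nonneg_right ((mul_nonneg (Real.exp_pos _).le h).trans (hmin htx))
      (Real.exp_pos _)
  rcases ht₀.1.eq_or_lt with h0 | h0
  · exact h0 ▸ (hu.initial x₀ hx₀).ge
  by_cases hx₀Ω : x₀ ∈ Ω
  · have ht₀S : t₀ ∈ Ioo 0 S := ⟨h0, ht₀.2.trans_lt ht.2⟩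
    exact hu.nonneg_of_isMinOn_exp_mul hΩo (by linarith [hc t₀ ht₀S x₀ hx₀Ω])
      (hf t₀ ht₀S x₀ hx₀Ω) ⟨h0, ht₀.2⟩ ht.2 hx₀Ω hmin
  · have hfr : x₀ ∈ frontier Ω := hΩo.frontier_eq ▸ ⟨hx₀, hx₀Ω⟩
    have ht₀S : t₀ ∈ Icc 0 S := ⟨h0.le, ht₀.2.trans ht.2.le⟩
    exact (hg t₀ ht₀S x₀ hfr).trans_eq (hu.lateral t₀ ht₀S x₀ hfr).symm

theorem nonneg {m t : ℝ} {x : Fin n → ℝ} (hΩo : IsOpen Ω)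
    (hΩb : Bornology.IsBounded Ω) (hu : IsClassicalSolution Ω S c f g u)
    (hc : ∀ t ∈ Ioo 0 S, ∀ x ∈ Ω, m ≤ c t x) (hf : ∀ t ∈ Ioo 0 S, ∀ x ∈ Ω, 0 ≤ f t x)
    (hg : ∀ t ∈ Icc 0 S, ∀ x ∈ frontier Ω, 0 ≤ g t x) (ht : t ∈ Icc 0 S)
    (hx : x ∈ closure Ω) : 0 ≤ u t x := by
  obtain rfl | hS := (ht.1.trans ht.2).eq_or_lt
  · exact le_antisymm ht.1 ht.2 ▸ (hu.initial x hx).ge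
  -- The equation is not available at time `S`, which is reached by continuity.
  have hcont : ContinuousOn (fun s => u s x) (closure (Ico 0 S)) := by
    rw [closure_Ico hS.ne]
    exact hu.cont.uncurry_right x hx
  refine le_on_closure (fun s hs => ?_) continuousOn_const hcont
    (closure_Ico hS.ne ▸ ht)
  exact hu.nonneg_of_lt hΩo hΩb hc hf hg hs hx

theorem le_of_potential_le {m t : ℝ} {x : Fin n → ℝ} (hΩo : IsOpen Ω)
    (hΩb : Bornology.IsBounded Ω) (h₁ : IsClassicalSolution Ω S c₁ f₁ g₁ u₁)
    (h₂ : IsClassicalSolution Ω S c₂ f₂ g₂ u₂) (hm : ∀ t ∈ Ioo 0 S, ∀ x ∈ Ω, m ≤ c₁ t x)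
    (hc : ∀ t ∈ Ioo 0 S, ∀ x ∈ Ω, c₁ t x ≤ c₂ t x)
    (hf₂ : ∀ t ∈ Ioo 0 S, ∀ x ∈ Ω, 0 ≤ f₂ t x)
    (hf : ∀ t ∈ Ioo 0 S, ∀ x ∈ Ω, f₂ t x ≤ f₁ t x)
    (hg₂ : ∀ t ∈ Icc 0 S, ∀ x ∈ frontier Ω, 0 ≤ g₂ t x)
    (hg : ∀ t ∈ Icc 0 S, ∀ x ∈ frontier Ω, g₂ t x ≤ g₁ t x)
    (ht : t ∈ Icc 0 S) (hx : x ∈ closure Ω) : u₂ t x ≤ u₁ t x := by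
  have hu₂ : ∀ t ∈ Icc 0 S, ∀ x ∈ closure Ω, 0 ≤ u₂ t x := fun t ht x hx =>
    h₂.nonneg hΩo hΩb (fun t ht x hx => (hm t ht x hx).trans (hc t ht x hx)) hf₂ hg₂ ht hx
  refine sub_nonneg.1 ((h₁.sub hΩo h₂).nonneg hΩo hΩb hm (fun t ht x hx => ?_)
    (fun t ht x hx => sub_nonneg.2 (hg t ht x hx)) ht hx)
  exact add_nonneg (sub_nonneg.2 (hf t ht x hx)) (mul_nonneg (sub_nonneg.2 (hc t ht x hx))
    (hu₂ t (Ioo_subset_Icc_self ht) x (subset_closure hx)))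

end IsClassicalSolution

section Semilinear

variable {n : ℕ} {Ω : Set (Fin n → ℝ)} {S : ℝ} {F : ℝ → (Fin n → ℝ) → ℝ → ℝ}

theorem uDeriv_le_uDeriv_zero {t : ℝ} {x : Fin n → ℝ}
    (hF : Differentiable ℝ (uDeriv F t x)) (hpos : ∀ u, 0 ≤ u → uDeriv2 F t x u ≤ 0)
    (hneg : ∀ u, u ≤ 0 → 0 ≤ uDeriv2 F t x u) (u : ℝ) :
    uDeriv F t x u ≤ uDeriv F t x 0 :=
  isMaxOn_univ_of_deriv (hF 0).continuousAt hF.differentiableOn hF.differentiableOn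
    (fun u hu => hneg u hu.le) (fun u hu => hpos u hu.le) (mem_univ u)

theorem exists_le_uDeriv_comp (hΩ : Bornology.IsBounded Ω)
    (hF : ContinuousOn (fun p : ℝ × (Fin n → ℝ) × ℝ => uDeriv F p.1 p.2.1 p.2.2)
      (Icc 0 S ×ˢ closure Ω ×ˢ (univ : Set ℝ)))
    {u : ℝ → (Fin n → ℝ) → ℝ}
    (hu : ContinuousOn (fun p : ℝ × (Fin n → ℝ) => u p.1 p.2) (Icc 0 S ×ˢ closure Ω)) :
    ∃ m, ∀ t ∈ Icc 0 S, ∀ x ∈ closure Ω, m ≤ uDeriv F t x (u t x) := by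
  have hcomp : ContinuousOn (fun p : ℝ × (Fin n → ℝ) => uDeriv F p.1 p.2 (u p.1 p.2))
      (Icc 0 S ×ˢ closure Ω) :=
    hF.comp (f := fun p : ℝ × (Fin n → ℝ) => (p.1, p.2, u p.1 p.2))
      (continuousOn_fst.prodMk (continuousOn_snd.prodMk hu))
      (fun p hp => ⟨hp.1, hp.2, mem_univ _⟩)
  obtain ⟨m, hm⟩ := (isCompact_Icc.prod hΩ.isCompact_closure).bddBelow_image hcomp
  exact ⟨m, fun t ht x hx => hm ⟨(t, x), ⟨ht, hx⟩, rfl⟩⟩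

theorem le_linearization (hΩo : IsOpen Ω) (hΩb : Bornology.IsBounded Ω)
    {χ q u u1 w : ℝ → (Fin n → ℝ) → ℝ}
    (hχ : ∀ t ∈ Icc 0 S, ∀ x ∈ frontier Ω, 0 ≤ χ t x)
    (hF : ContinuousOn (fun p : ℝ × (Fin n → ℝ) × ℝ => uDeriv F p.1 p.2.1 p.2.2)
      (Icc 0 S ×ˢ closure Ω ×ˢ (univ : Set ℝ)))
    (hu : ContinuousOn (fun p : ℝ × (Fin n → ℝ) => u p.1 p.2) (Icc 0 S ×ˢ closure Ω))
    (hq : ∀ t ∈ Ioo 0 S, ∀ x ∈ Ω, uDeriv F t x (u t x) ≤ q t x)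
    (hu1 : IsClassicalSolution Ω S (fun t x => uDeriv F t x (u t x)) (fun _ _ => 0) χ u1)
    (hw : IsClassicalSolution Ω S q (fun _ _ => 0) χ w)
    {t : ℝ} (ht : t ∈ Icc 0 S) {x : Fin n → ℝ} (hx : x ∈ closure Ω) : w t x ≤ u1 t x := by
  obtain ⟨m, hm⟩ := exists_le_uDeriv_comp hΩb hF hu
  exact hu1.le_of_potential_le hΩo hΩb hw
    (fun t ht x hx => hm t (Ioo_subset_Icc_self ht) x (subset_closure hx)) hq
    (fun _ _ _ _ => le_rfl) (fun _ _ _ _ => le_rfl) hχ (fun _ _ _ _ => le_rfl) ht hx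

end Semilinear

end Paper

theorem statement7_general {n : ℕ} {Ω : Set (Fin n → ℝ)} (hΩo : IsOpen Ω)
    (hΩb : Bornology.IsBounded Ω) {S r : ℝ} (hr : 0 ≤ r) {χ q w : ℝ → (Fin n → ℝ) → ℝ}
    (hχ : ∀ t ∈ Icc 0 S, ∀ x ∈ frontier Ω, 0 ≤ χ t x)
    (hw : IsClassicalSolution Ω S q (fun _ _ => 0) χ w)
    {F₁ F₂ : ℝ → (Fin n → ℝ) → ℝ → ℝ} (hF₁ : C1InU Ω S F₁)
    (hF₁q : ∀ t ∈ Ioo 0 S, ∀ x ∈ Ω, ∀ u, uDeriv F₁ t x u ≤ q t x)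
    {v v1 : ℝ → ℝ → (Fin n → ℝ) → ℝ}
    (hv : ∀ lam ∈ Icc (-r) r, IsClassicalSolution Ω S (fun _ _ => 0)
      (fun t x => -F₁ t x (v lam t x)) (fun t x => lam * χ t x) (v lam))
    (hv1 : ∀ lam ∈ Ioo (-r) r, IsClassicalSolution Ω S
      (fun t x => uDeriv F₁ t x (v lam t x)) (fun _ _ => 0) χ (v1 lam))
    {t : ℝ} (ht : t ∈ Icc 0 S) {x : Fin n → ℝ} (hx : x ∈ closure Ω)
    (hv0 : v 0 t x = 0)
    (hvcont : ContinuousOn (fun lam => v lam t x) (Icc (-r) r))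
    (hvderiv : ∀ lam ∈ Ioo (-r) r, HasDerivAt (fun μ => v μ t x) (v1 lam t x) lam)
    (hF₂ : Differentiable ℝ (F₂ t x)) (hF0 : F₁ t x 0 = F₂ t x 0)
    (hDN : ∀ lam ∈ Icc (-r) r, uDeriv F₁ t x (v lam t x) = uDeriv F₂ t x (v lam t x)) :
    EqOn (F₁ t x) (F₂ t x) (Icc (-(w t x * r)) (w t x * r)) := by
  have hwv1 : ∀ lam ∈ Ioo (-r) r, w t x ≤ v1 lam t x := fun lam hlam =>
    le_linearization hΩo hΩb hχ hF₁.2.2 (hv lam (Ioo_subset_Icc_self hlam)).cont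
      (fun t ht x hx => hF₁q t ht x hx _) (hv1 lam hlam) hw ht hx
  have hrange : Icc (-(w t x * r)) (w t x * r) ⊆ (fun lam => v lam t x) '' Icc (-r) r :=
    Icc_subset_image_of_le_deriv hr hvcont hvderiv hwv1 hv0
  have hderiv : EqOn (deriv (F₁ t x)) (deriv (F₂ t x)) (Icc (-(w t x * r)) (w t x * r)) := by
    intro u hu
    obtain ⟨lam, hlam, rfl⟩ := hrange hu
    exact hDN lam hlam
  intro s hs
  have h0 : 0 ∈ Icc (-(w t x * r)) (w t x * r) := by
    constructor <;> linarith [hs.1, hs.2]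
  exact eqOn_of_deriv_eq_of_convex (convex_Icc _ _) (fun u _ => hF₁.2.1 t ht x hx u)
    (fun u _ => hF₂ u) hderiv h0 hF0 hs

/-- uniqueness conclusion of Theorem 1: if moreover
`∂_uF₁(t,x,v_λ(t,x)) = ∂_uF₂(t,x,v_λ(t,x))` for all `λ ∈ [−r,r]` and `(t,x) ∈ (δ₁,S) × Ω`
(the consequence of the equality of the DN maps obtained by the first linearization), then
`F₁ = F₂` on `(δ₁,S) × Ω × [−a₁r, a₁r]`. -/
theorem statement7 {n : ℕ} (hn : 2 ≤ n) (Ω : Set (Fin n → ℝ)) (hΩo : IsOpen Ω)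
    (hΩb : Bornology.IsBounded Ω) (hΩc : IsConnected Ω)
    (S δ₁ δ₂ r : ℝ) (hS : 0 < S) (hδ₁ : 0 < δ₁) (hδ₁S : δ₁ < S) (hδ₂ : 0 < δ₂) (hr : 0 < r)
    (χ : ℝ → (Fin n → ℝ) → ℝ)
    (hχc : ContinuousOn (fun p : ℝ × (Fin n → ℝ) => χ p.1 p.2) (Icc 0 S ×ˢ frontier Ω))
    (hχ0 : ∀ t ∈ Icc 0 S, ∀ x ∈ frontier Ω, 0 ≤ χ t x)
    (hχδ : ∀ t ∈ Icc δ₁ S, ∀ x ∈ frontier Ω, χ t x = δ₂)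
    (q : ℝ → (Fin n → ℝ) → ℝ)
    (hqc : ContinuousOn (fun p : ℝ × (Fin n → ℝ) => q p.1 p.2) (Ioo 0 S ×ˢ Ω))
    (hqb : ∃ C, ∀ t ∈ Ioo 0 S, ∀ x ∈ Ω, |q t x| ≤ C)
    (F₁ : ℝ → (Fin n → ℝ) → ℝ → ℝ) (hF₁ : C2InU Ω S F₁)
    (hF₁0 : ∀ t ∈ Icc 0 S, ∀ x ∈ closure Ω, F₁ t x 0 = 0)
    (hF₁conc : ∀ t ∈ Icc 0 S, ∀ x ∈ closure Ω,
      (∀ u : ℝ, 0 ≤ u → uDeriv2 F₁ t x u ≤ 0) ∧ (∀ u : ℝ, u ≤ 0 → 0 ≤ uDeriv2 F₁ t x u))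
    (hF₁q : ∀ t ∈ Ioo 0 S, ∀ x ∈ Ω, uDeriv F₁ t x 0 ≤ q t x)
    (v v1 v2 : ℝ → ℝ → (Fin n → ℝ) → ℝ)
    (hfam : SemilinearFamily Ω S r χ F₁ v v1 v2)
    (w : ℝ → (Fin n → ℝ) → ℝ)
    (hw : IsClassicalSolution Ω S q (fun _ _ => (0 : ℝ)) χ w)
    (F₂ : ℝ → (Fin n → ℝ) → ℝ → ℝ) (hF₂ : C1InU Ω S F₂)
    (hF₂0 : ∀ t ∈ Icc 0 S, ∀ x ∈ closure Ω, F₂ t x 0 = 0)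
    (hDN : ∀ lam ∈ Icc (-r) r, ∀ t ∈ Ioo δ₁ S, ∀ x ∈ Ω,
      uDeriv F₁ t x (v lam t x) = uDeriv F₂ t x (v lam t x)) :
    ∀ t ∈ Ioo δ₁ S, ∀ x ∈ Ω,
      ∀ s ∈ Icc (-(sInf ((fun p : ℝ × (Fin n → ℝ) => w p.1 p.2) ''
            (Icc δ₁ S ×ˢ closure Ω)) * r))
          (sInf ((fun p : ℝ × (Fin n → ℝ) => w p.1 p.2) '' (Icc δ₁ S ×ˢ closure Ω)) * r),
        F₁ t x s = F₂ t x s := by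
  intro t ht x hx s hs
  have ht0 : t ∈ Icc 0 S := ⟨hδ₁.le.trans ht.1.le, ht.2.le⟩
  have hxc : x ∈ closure Ω := subset_closure hx
  have hF₁le : ∀ t ∈ Ioo 0 S, ∀ x ∈ Ω, ∀ u, uDeriv F₁ t x u ≤ q t x := by
    intro t ht x hx u
    have hconc := hF₁conc t (Ioo_subset_Icc_self ht) x (subset_closure hx)
    have hdiff := hF₁.2.1 t (Ioo_subset_Icc_self ht) x (subset_closure hx)
    exact (uDeriv_le_uDeriv_zero hdiff hconc.1 hconc.2 u).trans (hF₁q t ht x hx)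
  have hinf := mul_le_mul_of_nonneg_right
    (hw.sInf_image_le hΩb hδ₁.le (Ioo_subset_Icc_self ht) hxc) hr.le
  exact statement7_general hΩo hΩb hr.le hχ0 hw hF₁.1 hF₁le hfam.sol
    (fun lam hlam => hfam.lin1 lam (Ioo_subset_Icc_self hlam)) ht0 hxc (hfam.zero t ht0 x hxc)
    (hfam.cont_lam t ht0 x hxc) (hfam.deriv1 t ht0 x hxc) (hF₂.2.1 t ht0 x hxc)
    ((hF₁0 t ht0 x hxc).trans (hF₂0 t ht0 x hxc).symm) (fun lam hlam => hDN lam hlam t ht x hx)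
    (Icc_subset_Icc (neg_le_neg hinf) hinf hs)
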